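/- arXiv:1901.07487 — 4 statements merged into one kernel-verified Lean document; each statement's English description precedes it below -/
import Mathlib

section
/- Let 0 < α < 2 and let X be a real-valued random variable whose characteristic function satisfies E[exp(iωX)] = exp(−|ω|^α) for all ω ∈ ℝ (i.e., X is standard symmetric α-stable). Then for every real λ with −1 < λ < α, E[|X|^λ] = 2^λ Γ((1+λ)/2) Γ(1 − λ/α) / ( Γ(1/2) Γ(1 − λ/2) ), where Γ denotes the Gamma function. -/
open MeasureTheory

/-!
The proof compares two expressions for the Laplace transform of `X ^ 2`.  Since `exp (-s x ^ 2)` is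
the characteristic function of a standard Gaussian `N` at `√(2 s) x`, Fubini's theorem gives, for
`s > 0`, the identity (`laplace_sq`)
`E exp (-s X ^ 2) = E exp (-(2 s) ^ (α / 2) |N| ^ α)`.
Both sides have the form `L s = E exp (-Y s ^ q)` with `Y ≥ 0`: on the left `Y = X ^ 2` and `q = 1`,
on the right `Y = 2 ^ (α / 2) |N| ^ α` and `q = α / 2`.  For any such `L`, differentiation under the
integral, Tonelli's theorem and the Gamma integral yield (`lintegral_rpow_mul_neg_deriv`)
`∫₀^∞ s ^ (-p) (-L' s) ds = Γ (1 - p / q) E Y ^ (p / q)` for `p < q`, `p ≠ 0`.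
With `p = λ / 2` this becomes
`Γ (1 - λ / 2) E |X| ^ λ = Γ (1 - λ / α) 2 ^ (λ / 2) E |N| ^ λ`,
and the absolute moments of `N` are again Gamma integrals.  Working with `L'` rather than `L` makes
all integrands nonnegative for both signs of `λ`, so that no integrability of `|X| ^ λ` has to be
known in advance.  The case `λ = 0` is trivial.
-/

lemma integral_gamma_kernel {p q c : ℝ} (hq : 0 < q) (hpq : p < q) (hc : 0 < c) :
    ∫ s in Set.Ioi (0 : ℝ), s ^ (-p) * (q * s ^ (q - 1) * c * Real.exp (-(c * s ^ q)))
      = Real.Gamma (1 - p / q) * c ^ (p / q) := by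
  have h1 : ∀ s ∈ Set.Ioi (0 : ℝ),
      s ^ (-p) * (q * s ^ (q - 1) * c * Real.exp (-(c * s ^ q)))
        = (q * c) * (s ^ (q - 1 - p) * Real.exp (-c * s ^ q)) := by
    intro s hs
    have hs' : (0 : ℝ) < s := hs
    rw [show q - 1 - p = -p + (q - 1) by ring, Real.rpow_add hs', neg_mul]
    ring
  rw [setIntegral_congr_fun measurableSet_Ioi h1, integral_const_mul,
    integral_rpow_mul_exp_neg_mul_rpow hq (by linarith) hc]
  have e1 : (q - 1 - p + 1) / q = 1 - p / q := by field_simp; ring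
  have e2 : -(q - 1 - p + 1) / q = p / q - 1 := by field_simp; ring
  rw [e1, e2, Real.rpow_sub_one hc.ne']
  field_simp

/-- The condition `p ≠ 0` is needed only for `c = 0`, where `c ^ (p / q)` would be `1`. -/
lemma lintegral_gamma_kernel {p q c : ℝ} (hq : 0 < q) (hpq : p < q) (hp : p ≠ 0) (hc : 0 ≤ c) :
    ∫⁻ s in Set.Ioi (0 : ℝ),
        ENNReal.ofReal (s ^ (-p) * (q * s ^ (q - 1) * c * Real.exp (-(c * s ^ q))))
      = ENNReal.ofReal (Real.Gamma (1 - p / q)) * ENNReal.ofReal (c ^ (p / q)) := by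
  rcases hc.eq_or_lt with rfl | hc
  · simp [Real.zero_rpow (div_ne_zero hp hq.ne')]
  have hG : 0 < Real.Gamma (1 - p / q) :=
    Real.Gamma_pos_of_pos (by rw [sub_pos, div_lt_one hq]; exact hpq)
  have hI := integral_gamma_kernel hq hpq hc
  rw [← ENNReal.ofReal_mul hG.le, ← hI, ofReal_integral_eq_lintegral_ofReal]
  · refine Integrable.of_integral_ne_zero ?_
    rw [hI]
    positivity
  · refine (ae_restrict_iff' measurableSet_Ioi).2 (Filter.Eventually.of_forall fun s hs => ?_)
    have hs' : (0 : ℝ) < s := hs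
    simp only [Pi.zero_apply]
    positivity

/-- The dominating function is the constant `2 * q / s` on `t > s / 2`, since `y * exp (-y) ≤ 1`. -/
lemma hasDerivAt_laplace {E : Type*} [MeasurableSpace E] (μ : Measure E) [IsProbabilityMeasure μ]
    {Y : E → ℝ} (hY : Measurable Y) (hY0 : ∀ x, 0 ≤ Y x) {q : ℝ} (hq : 0 < q) {s : ℝ}
    (hs : 0 < s) :
    Integrable (fun x => -(q * s ^ (q - 1) * Y x * Real.exp (-(Y x * s ^ q)))) μ ∧
    HasDerivAt (fun t : ℝ => ∫ x, Real.exp (-(Y x * t ^ q)) ∂μ)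
      (∫ x, -(q * s ^ (q - 1) * Y x * Real.exp (-(Y x * s ^ q))) ∂μ) s := by
  refine hasDerivAt_integral_of_dominated_loc_of_deriv_le (μ := μ)
    (F := fun t x => Real.exp (-(Y x * t ^ q)))
    (F' := fun t x => -(q * t ^ (q - 1) * Y x * Real.exp (-(Y x * t ^ q))))
    (s := Set.Ioi (s / 2)) (bound := fun _ => 2 * q / s)
    (Ioi_mem_nhds (by linarith)) ?_ ?_ ?_ ?_ (integrable_const _) ?_
  · exact Filter.Eventually.of_forall fun t => by fun_prop
  · refine Integrable.of_bound (by fun_prop) 1 (Filter.Eventually.of_forall fun x => ?_)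
    rw [Real.norm_eq_abs, Real.abs_exp, Real.exp_le_one_iff, neg_nonpos]
    have := hY0 x
    positivity
  · fun_prop
  · refine Filter.Eventually.of_forall fun x t ht => ?_
    have ht' : s / 2 < t := ht
    have ht0 : 0 < t := by linarith
    have hYx := hY0 x
    have h1 : Y x * t ^ q * Real.exp (-(Y x * t ^ q)) ≤ 1 :=
      (Real.mul_exp_neg_le_exp_neg_one _).trans (Real.exp_le_one_iff.2 (by norm_num))
    rw [norm_neg, Real.norm_of_nonneg (by positivity), Real.rpow_sub_one ht0.ne']
    calc q * (t ^ q / t) * Y x * Real.exp (-(Y x * t ^ q))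
        = q / t * (Y x * t ^ q * Real.exp (-(Y x * t ^ q))) := by ring
      _ ≤ q / t * 1 := by gcongr
      _ ≤ q / (s / 2) * 1 := by gcongr
      _ = 2 * q / s := by field_simp
  · refine Filter.Eventually.of_forall fun x t ht => ?_
    have ht' : s / 2 < t := ht
    have ht0 : 0 < t := by linarith
    have h := (((Real.hasDerivAt_rpow_const (p := q) (Or.inl ht0.ne')).const_mul (Y x)).neg).exp
    refine h.congr_deriv ?_
    simp only [Pi.neg_apply]
    ring

/-- Fractional moments of a nonnegative `Y` from the derivative of the transform
`s ↦ E exp (-Y s ^ q)`, as an identity in `[0, ∞]`. -/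
lemma lintegral_rpow_mul_neg_deriv {E : Type*} [MeasurableSpace E] (μ : Measure E)
    [IsProbabilityMeasure μ] {Y : E → ℝ} (hY : Measurable Y) (hY0 : ∀ x, 0 ≤ Y x) {p q : ℝ}
    (hq : 0 < q) (hpq : p < q) (hp : p ≠ 0) :
    ∫⁻ s in Set.Ioi (0 : ℝ), ENNReal.ofReal
        (s ^ (-p) * -deriv (fun t : ℝ => ∫ x, Real.exp (-(Y x * t ^ q)) ∂μ) s)
      = ENNReal.ofReal (Real.Gamma (1 - p / q)) * ∫⁻ x, ENNReal.ofReal (Y x ^ (p / q)) ∂μ := by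
  have h1 : ∀ s ∈ Set.Ioi (0 : ℝ), ENNReal.ofReal
        (s ^ (-p) * -deriv (fun t : ℝ => ∫ x, Real.exp (-(Y x * t ^ q)) ∂μ) s)
      = ∫⁻ x, ENNReal.ofReal
          (s ^ (-p) * (q * s ^ (q - 1) * Y x * Real.exp (-(Y x * s ^ q)))) ∂μ := by
    intro s hs
    have hs' : (0 : ℝ) < s := hs
    obtain ⟨hi, hd⟩ := hasDerivAt_laplace μ hY hY0 hq hs'
    rw [hd.deriv, ← integral_neg, ← integral_const_mul, ofReal_integral_eq_lintegral_ofReal]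
    · simp only [neg_neg]
    · exact hi.neg.const_mul _
    · refine Filter.Eventually.of_forall fun x => ?_
      have := hY0 x
      simp only [Pi.zero_apply, neg_neg]
      positivity
  rw [setLIntegral_congr_fun measurableSet_Ioi h1, lintegral_lintegral_swap,
    ← lintegral_const_mul _ (by fun_prop)]
  · exact lintegral_congr fun x => lintegral_gamma_kernel hq hpq hp (hY0 x)
  · refine Measurable.aemeasurable ?_
    unfold Function.uncurry
    fun_prop

lemma integral_abs_rpow_gaussian {l : ℝ} (hl : -1 < l) :
    ∫ u, |u| ^ l ∂(ProbabilityTheory.gaussianReal 0 1)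
      = 2 ^ (l / 2) * Real.Gamma ((1 + l) / 2) / Real.Gamma (1 / 2) := by
  rw [ProbabilityTheory.integral_gaussianReal_eq_integral_smul one_ne_zero]
  have h1 : ∀ u : ℝ, ProbabilityTheory.gaussianPDFReal 0 1 u • |u| ^ l
      = (fun x : ℝ => (√(2 * Real.pi))⁻¹ * (x ^ l * Real.exp (-(1 / 2) * x ^ (2 : ℝ)))) |u| := by
    intro u
    simp only [ProbabilityTheory.gaussianPDFReal, smul_eq_mul, NNReal.coe_one, mul_one, sub_zero,
      Real.rpow_two, sq_abs]
    rw [show -(u ^ 2) / 2 = -(1 / 2) * u ^ 2 by ring]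
    ring
  simp_rw [h1]
  rw [integral_comp_abs (f := fun x : ℝ =>
      (√(2 * Real.pi))⁻¹ * (x ^ l * Real.exp (-(1 / 2) * x ^ (2 : ℝ)))), integral_const_mul,
    integral_rpow_mul_exp_neg_mul_rpow two_pos hl (by norm_num), Real.Gamma_one_half_eq,
    Real.sqrt_mul zero_le_two, one_div (2 : ℝ), Real.inv_rpow zero_le_two,
    ← Real.rpow_neg zero_le_two, show -(-(l + 1) / 2) = l / 2 + 1 / 2 by ring,
    Real.rpow_add two_pos, ← Real.sqrt_eq_rpow, add_comm l 1]
  have : √(2 : ℝ) ≠ 0 := by positivity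
  have : √Real.pi ≠ 0 := by positivity
  field_simp

/-- For a standard Gaussian `N`, `E exp (-s X ^ 2) = E exp (i √(2 s) N X)`; conditioning on `N`
instead of `X` evaluates the right-hand side through the characteristic function of `X`. -/
lemma laplace_sq {α : ℝ} {μ : Measure ℝ} [IsProbabilityMeasure μ]
    (hμ : ∀ t : ℝ, charFun μ t = Complex.exp (Complex.ofReal (-(|t| ^ α)))) {s : ℝ} (hs : 0 < s) :
    ∫ x, Real.exp (-(x ^ 2 * s ^ (1 : ℝ))) ∂μ
      = ∫ u, Real.exp (-(2 ^ (α / 2) * |u| ^ α * s ^ (α / 2)))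
          ∂(ProbabilityTheory.gaussianReal 0 1) := by
  set γ := ProbabilityTheory.gaussianReal 0 1
  have hl : ∀ x : ℝ, ((Real.exp (-(x ^ 2 * s ^ (1 : ℝ))) : ℝ) : ℂ)
      = ∫ u, Complex.exp ((√(2 * s) * x * u : ℝ) * Complex.I) ∂γ := by
    intro x
    have h := charFun_apply_real (μ := γ) (√(2 * s) * x)
    rw [ProbabilityTheory.charFun_gaussianReal] at h
    push_cast at h ⊢
    rw [← h]
    congr 1
    have h2 : ((√(2 * s) : ℝ) : ℂ) ^ 2 = 2 * s := by
      rw [← Complex.ofReal_pow, Real.sq_sqrt (by positivity)]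
      push_cast
      rfl
    rw [mul_pow, h2, Real.rpow_one]
    simp
    ring
  have hr : ∀ u : ℝ, ((Real.exp (-(2 ^ (α / 2) * |u| ^ α * s ^ (α / 2))) : ℝ) : ℂ)
      = ∫ x, Complex.exp ((√(2 * s) * x * u : ℝ) * Complex.I) ∂μ := by
    intro u
    have h := charFun_apply_real (μ := μ) (√(2 * s) * u)
    rw [hμ] at h
    have e : |√(2 * s) * u| ^ α = 2 ^ (α / 2) * |u| ^ α * s ^ (α / 2) := by
      rw [abs_mul, abs_of_nonneg (Real.sqrt_nonneg _),
        Real.mul_rpow (Real.sqrt_nonneg _) (abs_nonneg _), Real.sqrt_eq_rpow,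
        ← Real.rpow_mul (by positivity), Real.mul_rpow zero_le_two hs.le,
        show 1 / 2 * α = α / 2 by ring]
      ring
    rw [e] at h
    rw [Complex.ofReal_exp, h]
    refine integral_congr_ae (Filter.Eventually.of_forall fun x => ?_)
    simp only
    congr 1
    push_cast
    ring
  apply Complex.ofReal_injective
  rw [← integral_complex_ofReal, ← integral_complex_ofReal]
  simp_rw [hl, hr]
  refine integral_integral_swap (Integrable.of_bound ?_ 1 ?_)
  · unfold Function.uncurry
    exact Continuous.aestronglyMeasurable (by fun_prop)
  · refine Filter.Eventually.of_forall fun z => ?_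
    simp only [Function.uncurry]
    rw [Complex.norm_exp_ofReal_mul_I]

/-- fractional absolute moments of a standard symmetric α-stable
random variable. -/
theorem stmt9 (α : ℝ) (hα0 : 0 < α) (hα2 : α < 2)
    {Ω : Type*} [MeasurableSpace Ω] (P : Measure Ω) [IsProbabilityMeasure P]
    (X : Ω → ℝ) (hX : AEMeasurable X P)
    (hchar : ∀ t : ℝ,
      (∫ ω, Complex.exp (Complex.I * Complex.ofReal (t * X ω)) ∂P)
        = Complex.exp (Complex.ofReal (-(|t| ^ α))))
    (lam : ℝ) (hlam1 : -1 < lam) (hlam2 : lam < α) :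
    (∫ ω, |X ω| ^ lam ∂P)
      = 2 ^ lam * Real.Gamma ((1 + lam) / 2) * Real.Gamma (1 - lam / α)
        / (Real.Gamma (1 / 2) * Real.Gamma (1 - lam / 2)) := by
  rcases eq_or_ne lam 0 with rfl | hl0
  · have : Real.Gamma (1 / 2) ≠ 0 := (Real.Gamma_pos_of_pos (by norm_num)).ne'
    simp only [Real.rpow_zero, integral_const, probReal_univ, smul_eq_mul, zero_div, sub_zero,
      add_zero, Real.Gamma_one, mul_one, one_mul]
    rw [div_self this]
  set μ := P.map X with hμdef
  have : IsProbabilityMeasure μ := Measure.isProbabilityMeasure_map hX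
  have hμ : ∀ t : ℝ, charFun μ t = Complex.exp (Complex.ofReal (-(|t| ^ α))) := by
    intro t
    rw [← hchar, charFun_apply_real, hμdef,
      integral_map hX (Continuous.aestronglyMeasurable (by fun_prop))]
    refine integral_congr_ae (Filter.Eventually.of_forall fun x => ?_)
    simp only
    congr 1
    push_cast
    ring
  have hm : ∫ ω, |X ω| ^ lam ∂P = ∫ x, |x| ^ lam ∂μ :=
    (integral_map hX (f := fun x : ℝ => |x| ^ lam)
      (Measurable.aestronglyMeasurable (by fun_prop))).symm
  set γ := ProbabilityTheory.gaussianReal 0 1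
  have hA := lintegral_rpow_mul_neg_deriv μ (Y := fun x => x ^ 2) (by fun_prop)
    (fun x => sq_nonneg x) (p := lam / 2) (q := 1) one_pos (by linarith) (by simpa using hl0)
  have hB := lintegral_rpow_mul_neg_deriv γ (Y := fun u => 2 ^ (α / 2) * |u| ^ α) (by fun_prop)
    (fun u => by positivity) (p := lam / 2) (q := α / 2) (by linarith) (by linarith)
    (by simpa using hl0)
  have hAB : ENNReal.ofReal (Real.Gamma (1 - lam / 2)) * ∫⁻ x, ENNReal.ofReal (|x| ^ lam) ∂μ
      = ENNReal.ofReal (Real.Gamma (1 - lam / α))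
        * ∫⁻ u, ENNReal.ofReal (2 ^ (lam / 2) * |u| ^ lam) ∂γ := by
    have e1 : ∀ x : ℝ, (x ^ 2) ^ (lam / 2 / 1) = |x| ^ lam := by
      intro x
      rw [← sq_abs, ← Real.rpow_two, ← Real.rpow_mul (abs_nonneg _)]
      congr 1
      ring
    have e2 : ∀ u : ℝ, ((2 : ℝ) ^ (α / 2) * |u| ^ α) ^ (lam / 2 / (α / 2))
        = 2 ^ (lam / 2) * |u| ^ lam := by
      intro u
      rw [Real.mul_rpow (by positivity) (by positivity), ← Real.rpow_mul zero_le_two,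
        ← Real.rpow_mul (abs_nonneg _)]
      congr 2 <;> field_simp
    simp_rw [e1] at hA
    simp_rw [e2] at hB
    rw [div_one] at hA
    rw [div_div_div_cancel_right₀ two_ne_zero] at hB
    rw [← hA, ← hB]
    refine setLIntegral_congr_fun measurableSet_Ioi fun s hs => ?_
    -- The two transforms agree near every `s > 0`, hence so do their derivatives.
    have := Filter.EventuallyEq.deriv_eq
      (Filter.eventually_of_mem (Ioi_mem_nhds hs) fun (t : ℝ) (ht : 0 < t) => laplace_sq hμ ht)
    simp only [this, γ]
  -- `∫ f = (∫⁻ f).toReal` holds for every nonnegative measurable `f`, integrable or not.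
  have hR := congrArg ENNReal.toReal hAB
  have hG1 : 0 < Real.Gamma (1 - lam / 2) := Real.Gamma_pos_of_pos (by linarith)
  have hG2 : 0 < Real.Gamma (1 - lam / α) :=
    Real.Gamma_pos_of_pos (by rw [sub_pos, div_lt_one hα0]; exact hlam2)
  have hG3 : 0 < Real.Gamma (1 / 2) := Real.Gamma_pos_of_pos (by norm_num)
  rw [ENNReal.toReal_mul, ENNReal.toReal_mul, ENNReal.toReal_ofReal hG1.le,
    ENNReal.toReal_ofReal hG2.le,
    ← integral_eq_lintegral_of_nonneg_ae (Filter.Eventually.of_forall fun x => by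
      simp only [Pi.zero_apply]; positivity) (Measurable.aestronglyMeasurable (by fun_prop)),
    ← integral_eq_lintegral_of_nonneg_ae (Filter.Eventually.of_forall fun x => by
      simp only [Pi.zero_apply]; positivity) (Measurable.aestronglyMeasurable (by fun_prop)),
    integral_const_mul, integral_abs_rpow_gaussian hlam1] at hR
  have h2 : (2 : ℝ) ^ lam = 2 ^ (lam / 2) * 2 ^ (lam / 2) := by
    rw [← Real.rpow_add two_pos, add_halves]
  rw [hm, h2, eq_div_iff (by positivity)]
  calc _ = Real.Gamma (1 / 2) * (Real.Gamma (1 - lam / 2) * ∫ x, |x| ^ lam ∂μ) := by ring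
    _ = _ := by
      rw [hR]
      field_simp
end

section
/- Let f : ℝ^d → ℝ be differentiable with Hölder continuous gradient: ‖∇f(x) − ∇f(y)‖ ≤ M̃ ‖x − y‖^γ for all x, y ∈ ℝ^d, where M̃ > 0 and γ ∈ [0,1). Let w* ∈ ℝ^d be a global minimizer of f with ∇f(w*) = 0, and let β > 0. Then log ∫_{ℝ^d} exp(−β f(w)) dw ≥ −β f(w*) − (β^{−γ} M̃)/(1+γ) + log( π^{d/2} β^{−d} / Γ(d/2 + 1) ), where π denotes Archimedes' constant and Γ the Gamma function (interpreting log ∫ = +∞ if the integral diverges, in which case the inequality holds trivially; the substantive case is 0 < ∫ exp(−βf) < ∞). -/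
open MeasureTheory

/-!
The gradient bound at the critical point `wstar`, integrated along the segment from `wstar` to
`wstar + v`, gives the growth estimate `f (wstar + v) ≤ f wstar + Mt / (1 + γ) * ‖v‖ ^ (1 + γ)`
(`growth_bound`). On the ball of radius `1 / β` about `wstar` this yields
`β * f w ≤ β * f wstar + β ^ (-γ) * Mt / (1 + γ)`, so the integral of `exp (-β f)` is at least the
volume of that ball (`volume_ball_eq`) times the exponential of the negative of this constant.
Taking logarithms gives the claim.
-/

/-- The product `‖v‖ ^ γ * ‖v‖` stands for `‖v‖ ^ (1 + γ)`. -/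
lemma growth_bound {E : Type*} [NormedAddCommGroup E] [InnerProductSpace ℝ E] [CompleteSpace E]
    (f : E → ℝ) (hf : Differentiable ℝ f) (Mt γ : ℝ) (hγ0 : 0 ≤ γ)
    (hHolder : ∀ x y, ‖gradient f x - gradient f y‖ ≤ Mt * ‖x - y‖ ^ γ)
    (w : E) (hcrit : gradient f w = 0) (v : E) :
    f (w + v) ≤ f w + Mt / (1 + γ) * (‖v‖ ^ γ * ‖v‖) := by
  -- The gap between the model upper bound and `f` along the segment is nondecreasing in `t`.
  let h : ℝ → ℝ := fun t => Mt / (1 + γ) * (‖v‖ ^ γ * ‖v‖) * t ^ (1 + γ) - f (w + t • v)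
  have hd : ∀ t : ℝ, HasDerivAt h (Mt / (1 + γ) * (‖v‖ ^ γ * ‖v‖) * ((1 + γ) * t ^ γ)
      - inner ℝ (gradient f (w + t • v)) v) t := by
    intro t
    have h1 : HasDerivAt (fun t : ℝ => t ^ (1 + γ)) ((1 + γ) * t ^ γ) t := by
      have := Real.hasDerivAt_rpow_const (x := t) (p := 1 + γ) (Or.inr (by linarith))
      simpa using this
    have h2 : HasDerivAt (fun t : ℝ => w + t • v) v t := by
      simpa using ((hasDerivAt_id t).smul_const v).const_add w
    have h3 := ((hf (w + t • v)).hasGradientAt.hasFDerivAt).comp_hasDerivAt t h2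
    have h4 := (h1.const_mul (Mt / (1 + γ) * (‖v‖ ^ γ * ‖v‖))).sub h3
    have h5 : inner ℝ (gradient f (w + t • v)) v
        = (InnerProductSpace.toDual ℝ E) (gradient f (w + t • v)) v :=
      InnerProductSpace.toDual_apply_apply.symm
    rw [h5]
    exact h4
  have hmono : MonotoneOn h (Set.Icc 0 1) := by
    refine monotoneOn_of_deriv_nonneg (convex_Icc 0 1)
      (fun t _ => (hd t).continuousAt.continuousWithinAt)
      (fun t _ => (hd t).differentiableAt.differentiableWithinAt) ?_
    intro t ht
    rw [interior_Icc] at ht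
    rw [(hd t).deriv]
    have h1 := hHolder (w + t • v) w
    rw [hcrit, sub_zero, add_sub_cancel_left, norm_smul, Real.norm_of_nonneg ht.1.le,
      Real.mul_rpow ht.1.le (norm_nonneg v)] at h1
    have h2 := real_inner_le_norm (gradient f (w + t • v)) v
    have h3 := mul_le_mul_of_nonneg_right h1 (norm_nonneg v)
    have h4 : Mt / (1 + γ) * (‖v‖ ^ γ * ‖v‖) * ((1 + γ) * t ^ γ)
        = Mt * (t ^ γ * ‖v‖ ^ γ) * ‖v‖ := by
      have : 1 + γ ≠ 0 := by positivity
      field_simp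
    linarith
  have h01 := hmono (Set.left_mem_Icc.2 zero_le_one) (Set.right_mem_Icc.2 zero_le_one) zero_le_one
  have hne : 1 + γ ≠ 0 := by positivity
  simp [h, Real.zero_rpow hne] at h01
  linarith

/-- Unlike `EuclideanSpace.volume_ball`, this includes dimension zero, which is why the radius is
required to be positive. -/
lemma volume_ball_eq (d : ℕ) (x : EuclideanSpace ℝ (Fin d)) {β : ℝ} (hβ : 0 < β) :
    volume (Metric.ball x β⁻¹) = ENNReal.ofReal
      (Real.pi ^ ((d : ℝ) / 2) * β ^ (-(d : ℝ)) / Real.Gamma (d / 2 + 1)) := by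
  rcases Nat.eq_zero_or_pos d with rfl | hd
  · have : Metric.ball x β⁻¹ = Set.univ := by
      ext y
      simp [Subsingleton.elim y x, hβ]
    rw [this]
    simp [volume_euclideanSpace_eq_dirac]
  · have : Nonempty (Fin d) := ⟨⟨0, hd⟩⟩
    rw [EuclideanSpace.volume_ball, Fintype.card_fin, ← ENNReal.ofReal_pow (by positivity),
      ← ENNReal.ofReal_mul (by positivity)]
    congr 1
    rw [Real.rpow_neg hβ.le, Real.rpow_natCast, Real.sqrt_eq_rpow, ← Real.rpow_natCast (_ ^ _),
      ← Real.rpow_mul Real.pi_pos.le, inv_pow, one_div_mul_eq_div]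
    ring

/-- lower bound on the log-normalizing constant of the Gibbs
measure; the left-hand side is interpreted as +∞ (in `EReal`, via
`ENNReal.log` of the Lebesgue integral) when the integral diverges. -/
theorem stmt13 {d : ℕ} (f : EuclideanSpace ℝ (Fin d) → ℝ) (hf : Differentiable ℝ f)
    (Mt γ β : ℝ) (hM : 0 < Mt) (hγ0 : 0 ≤ γ) (hγ1 : γ < 1) (hβ : 0 < β)
    (hHolder : ∀ x y, ‖gradient f x - gradient f y‖ ≤ Mt * ‖x - y‖ ^ γ)
    (wstar : EuclideanSpace ℝ (Fin d))
    (hmin : ∀ w, f wstar ≤ f w) (hcrit : gradient f wstar = 0) :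
    ((-β * f wstar - β ^ (-γ) * Mt / (1 + γ)
        + Real.log (Real.pi ^ ((d : ℝ) / 2) * β ^ (-(d : ℝ)) / Real.Gamma (d / 2 + 1))
        : ℝ) : EReal)
      ≤ ENNReal.log (∫⁻ w, ENNReal.ofReal (Real.exp (-β * f w))) := by
  set c : ℝ := -β * f wstar - β ^ (-γ) * Mt / (1 + γ) with hc
  set V : ℝ := Real.pi ^ ((d : ℝ) / 2) * β ^ (-(d : ℝ)) / Real.Gamma (d / 2 + 1) with hV
  have hVpos : 0 < V := by
    have : 0 < Real.Gamma ((d : ℝ) / 2 + 1) := Real.Gamma_pos_of_pos (by positivity)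
    positivity
  have hball : ∀ w ∈ Metric.ball wstar β⁻¹, c ≤ -β * f w := by
    intro w hw
    rw [mem_ball_iff_norm] at hw
    have h1 := growth_bound f hf Mt γ hγ0 hHolder wstar hcrit (w - wstar)
    rw [add_sub_cancel] at h1
    have h2 : ‖w - wstar‖ ^ γ * ‖w - wstar‖ ≤ β⁻¹ ^ γ * β⁻¹ := by gcongr
    have h3 : f w ≤ f wstar + Mt / (1 + γ) * (β⁻¹ ^ γ * β⁻¹) := h1.trans (by gcongr)
    have h4 := mul_le_mul_of_nonneg_left h3 hβ.le
    have h5 : β * (f wstar + Mt / (1 + γ) * (β⁻¹ ^ γ * β⁻¹))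
        = β * f wstar + β ^ (-γ) * Mt / (1 + γ) := by
      rw [Real.inv_rpow hβ.le, ← Real.rpow_neg hβ.le]
      field_simp
    rw [hc]
    linarith
  have hint : ENNReal.ofReal (Real.exp c * V)
      ≤ ∫⁻ w, ENNReal.ofReal (Real.exp (-β * f w)) := by
    calc ENNReal.ofReal (Real.exp c * V)
        = ∫⁻ _ in Metric.ball wstar β⁻¹, ENNReal.ofReal (Real.exp c) := by
          rw [setLIntegral_const, volume_ball_eq d wstar hβ,
            ← ENNReal.ofReal_mul (Real.exp_pos c).le]
      _ ≤ ∫⁻ w in Metric.ball wstar β⁻¹, ENNReal.ofReal (Real.exp (-β * f w)) := by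
          refine setLIntegral_mono' measurableSet_ball fun w hw => ?_
          exact ENNReal.ofReal_le_ofReal (Real.exp_le_exp.2 (hball w hw))
      _ ≤ _ := setLIntegral_le_lintegral _ _
  refine le_trans (le_of_eq ?_) (ENNReal.log_monotone hint)
  rw [ENNReal.log_ofReal_of_pos (by positivity), Real.log_mul (by positivity) hVpos.ne',
    Real.log_exp]
end

section
/- Let f : ℝ^d → ℝ be differentiable with Hölder continuous gradient ‖∇f(x) − ∇f(y)‖ ≤ M̃‖x − y‖^γ for all x, y (M̃ > 0, γ ∈ [0,1)), let w* be a global minimizer of f with ∇f(w*) = 0 and f* = f(w*), and let β > 0, m > 0, b ≥ 0. Assume Z := ∫_{ℝ^d} exp(−βf(w)) dw satisfies 0 < Z < ∞, and let π̂ be the probability measure on ℝ^d with density w ↦ exp(−βf(w))/Z. Assume f is integrable with respect to π̂, the second moment satisfies ∫ ‖w‖² dπ̂(w) ≤ (b + d/β)/m, and the density p(w) = exp(−βf(w))/Z satisfies the maximum-entropy bound −∫ p log p ≤ (d/2) log( 2πe (b + d/β)/(dm) ) (which holds whenever p log p is integrable, by comparison with the Gaussian of equal second moment). Then ∫ f dπ̂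 − f* ≤ β^{−1} log( (2e(b + d/β))^{d/2} Γ(d/2 + 1) β^{d} / (dm)^{d/2} ) + (β^{−γ−1} M̃)/(1+γ). -/
open MeasureTheory

/-!
Write `p = exp (-β f) / Z`. Since `log p = -β f - log Z`, the differential entropy of `p` equals
`β ∫ f dπ̂ + log Z`, so the assumed entropy bound controls `∫ f dπ̂` by an upper bound on `-log Z`.

For the latter, the Hölder condition on the gradient gives the descent estimate
`f w - f wstar ≤ Mt / (1 + γ) * ‖w - wstar‖ ^ (1 + γ)` (`sub_le_of_holder_gradient`). Restricting the
integral defining `Z` to the ball of radius `1 / β` around `wstar` then yields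
`Z ≥ exp (-β f wstar - β ^ (-γ) Mt / (1 + γ)) * vol (B(1 / β))` (`exp_mul_volume_ball_le_integral`),
and the volume of this ball is `π ^ (d / 2) / (Γ (d / 2 + 1) β ^ d)`. Combining the two, the
powers of `π` cancel.
-/

/-- Descent estimate at a critical point of a function with `γ`-Hölder gradient, obtained by
comparing `t ↦ f (x₀ + t • (x - x₀))` on `[0, 1]` with a multiple of `t ↦ t ^ (1 + γ)`. -/
lemma sub_le_of_holder_gradient {E : Type*} [NormedAddCommGroup E] [InnerProductSpace ℝ E]
    [CompleteSpace E] {f : E → ℝ} (hf : Differentiable ℝ f) {M γ : ℝ} (hγ : 0 ≤ γ)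
    (hH : ∀ x y, ‖gradient f x - gradient f y‖ ≤ M * ‖x - y‖ ^ γ)
    {x₀ : E} (hcrit : gradient f x₀ = 0) (x : E) :
    f x - f x₀ ≤ M / (1 + γ) * ‖x - x₀‖ ^ (1 + γ) := by
  have h1γ : 1 + γ ≠ 0 := by positivity
  set v := x - x₀ with hv
  have hline : ∀ t : ℝ, HasDerivAt (fun t : ℝ => f (x₀ + t • v))
      (inner ℝ (gradient f (x₀ + t • v)) v) t := by
    intro t
    have h1 : HasDerivAt (fun t : ℝ => x₀ + t • v) v t := by
      simpa using ((hasDerivAt_id t).smul_const v).const_add x₀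
    have h2 := ((hf (x₀ + t • v)).hasGradientAt.hasFDerivAt).comp_hasDerivAt t h1
    exact h2
  have hbound : ∀ t : ℝ, HasDerivAt
      (fun t : ℝ => f x₀ + M / (1 + γ) * ‖v‖ ^ (1 + γ) * t ^ (1 + γ))
      (M * ‖v‖ ^ (1 + γ) * t ^ γ) t := by
    intro t
    have h := ((Real.hasDerivAt_rpow_const (x := t) (p := 1 + γ) (Or.inr (by linarith))).const_mul
      (M / (1 + γ) * ‖v‖ ^ (1 + γ))).const_add (f x₀)
    refine h.congr_deriv ?_
    rw [add_sub_cancel_left]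
    field_simp
  have key := image_le_of_deriv_right_le_deriv_boundary (a := 0) (b := 1)
    (f := fun t : ℝ => f (x₀ + t • v)) (f' := fun t => inner ℝ (gradient f (x₀ + t • v)) v)
    (B := fun t : ℝ => f x₀ + M / (1 + γ) * ‖v‖ ^ (1 + γ) * t ^ (1 + γ))
    (B' := fun t => M * ‖v‖ ^ (1 + γ) * t ^ γ)
    (fun t _ => (hline t).continuousAt.continuousWithinAt)
    (fun t _ => (hline t).hasDerivWithinAt)
    (by simp [Real.zero_rpow h1γ])
    (fun t _ => (hbound t).continuousAt.continuousWithinAt)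
    (fun t _ => (hbound t).hasDerivWithinAt)
    (by
      intro t ht
      calc inner ℝ (gradient f (x₀ + t • v)) v
          ≤ ‖gradient f (x₀ + t • v)‖ * ‖v‖ := real_inner_le_norm _ _
        _ ≤ (M * ‖t • v‖ ^ γ) * ‖v‖ := by
            gcongr
            simpa [hcrit] using hH (x₀ + t • v) x₀
        _ = M * ‖v‖ ^ (1 + γ) * t ^ γ := by
            rw [norm_smul, Real.norm_of_nonneg ht.1, Real.mul_rpow ht.1 (norm_nonneg _),
              Real.rpow_add' (norm_nonneg _) h1γ, Real.rpow_one]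
            ring)
    (Set.right_mem_Icc.2 zero_le_one)
  simp only [one_smul, Real.one_rpow, mul_one, hv, add_sub_cancel] at key
  linarith

/-- Lower bound for a partition function: near a critical point `x₀` the energy exceeds `f x₀` by
at most the Hölder remainder, and only the ball of radius `r` is kept in the integral. -/
lemma exp_mul_volume_ball_le_integral {E : Type*} [NormedAddCommGroup E] [InnerProductSpace ℝ E]
    [FiniteDimensional ℝ E] [MeasurableSpace E] [BorelSpace E]
    {f : E → ℝ} (hf : Differentiable ℝ f) {M γ β r : ℝ} (hM : 0 ≤ M) (hγ : 0 ≤ γ) (hβ : 0 ≤ β)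
    (hH : ∀ x y, ‖gradient f x - gradient f y‖ ≤ M * ‖x - y‖ ^ γ)
    {x₀ : E} (hcrit : gradient f x₀ = 0)
    (hint : Integrable (fun w => Real.exp (-β * f w))) :
    Real.exp (-β * (f x₀ + M / (1 + γ) * r ^ (1 + γ))) * volume.real (Metric.ball x₀ r)
      ≤ ∫ w, Real.exp (-β * f w) := by
  calc Real.exp (-β * (f x₀ + M / (1 + γ) * r ^ (1 + γ))) * volume.real (Metric.ball x₀ r)
      ≤ ∫ w in Metric.ball x₀ r, Real.exp (-β * f w) := by
        refine setIntegral_ge_of_const_le_real measurableSet_ball measure_ball_lt_top.ne ?_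
          hint.integrableOn
        intro w hw
        have hw' : ‖w - x₀‖ ≤ r := by
          rw [← dist_eq_norm]; exact (Metric.mem_ball.1 hw).le
        have h1 := sub_le_of_holder_gradient hf hγ hH hcrit w
        have h2 : M / (1 + γ) * ‖w - x₀‖ ^ (1 + γ) ≤ M / (1 + γ) * r ^ (1 + γ) := by gcongr
        apply Real.exp_le_exp.2
        rw [neg_mul, neg_mul, neg_le_neg_iff]
        gcongr
        linarith
    _ ≤ ∫ w, Real.exp (-β * f w) :=
        setIntegral_le_integral hint (Filter.Eventually.of_forall fun w => (Real.exp_pos _).le)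

/-- The ball volume in real form, for every dimension (including `d = 0`). -/
lemma volume_real_ball_euclidean (d : ℕ) (x : EuclideanSpace ℝ (Fin d)) {r : ℝ} (hr : 0 < r) :
    volume.real (Metric.ball x r)
      = r ^ d * (Real.pi ^ ((d : ℝ) / 2) / Real.Gamma ((d : ℝ) / 2 + 1)) := by
  rcases Nat.eq_zero_or_pos d with rfl | hd
  · have : Metric.ball x r = {x} := by
      ext y; simp [Subsingleton.elim y x, hr]
    rw [this, Subsingleton.elim x 0]
    simp [Measure.real, volume_euclideanSpace_eq_dirac]
  · have : Nonempty (Fin d) := ⟨⟨0, hd⟩⟩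
    rw [Measure.real, EuclideanSpace.volume_ball]
    have hs : Real.sqrt Real.pi ^ d = Real.pi ^ ((d : ℝ) / 2) := by
      rw [Real.sqrt_eq_rpow, ← Real.rpow_mul_natCast Real.pi_pos.le]
      ring_nf
    have hG : 0 < Real.Gamma ((d : ℝ) / 2 + 1) := Real.Gamma_pos_of_pos (by positivity)
    simp only [Fintype.card_fin, ENNReal.toReal_mul, ENNReal.toReal_pow,
      ENNReal.toReal_ofReal hr.le, hs]
    rw [ENNReal.toReal_ofReal (by positivity)]

/-- The differential entropy of a Gibbs density is `β` times the mean energy plus `log Z`. -/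
lemma entropy_gibbs {E : Type*} [MeasurableSpace E] {μ : Measure E} {f : E → ℝ} {β Z : ℝ}
    (hint : Integrable (fun w => Real.exp (-β * f w)) μ)
    (hZdef : Z = ∫ w, Real.exp (-β * f w) ∂μ) (hZ : 0 < Z)
    (hfπ : Integrable f (μ.withDensity fun w => ENNReal.ofReal (Real.exp (-β * f w) / Z))) :
    -(∫ w, (Real.exp (-β * f w) / Z) * Real.log (Real.exp (-β * f w) / Z) ∂μ)
      = β * (∫ w, f w ∂(μ.withDensity fun w => ENNReal.ofReal (Real.exp (-β * f w) / Z)))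
        + Real.log Z := by
  have hp0 : ∀ w, 0 ≤ Real.exp (-β * f w) / Z := fun w => by positivity
  have hmeas : AEMeasurable (fun w => ENNReal.ofReal (Real.exp (-β * f w) / Z)) μ :=
    (hint.div_const Z).aestronglyMeasurable.aemeasurable.ennreal_ofReal
  have hfin : ∀ᵐ w ∂μ, ENNReal.ofReal (Real.exp (-β * f w) / Z) < ⊤ :=
    Filter.Eventually.of_forall fun w => ENNReal.ofReal_lt_top
  have hI : Integrable (fun w => Real.exp (-β * f w) / Z * f w) μ := by
    have := (integrable_withDensity_iff_integrable_smul₀' hmeas hfin).1 hfπ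
    simp only [ENNReal.toReal_ofReal (hp0 _), smul_eq_mul] at this
    exact this
  rw [integral_withDensity_eq_integral_toReal_smul₀ hmeas hfin]
  simp only [ENNReal.toReal_ofReal (hp0 _), smul_eq_mul]
  have hlog : ∀ w, Real.exp (-β * f w) / Z * Real.log (Real.exp (-β * f w) / Z)
      = (-β) * (Real.exp (-β * f w) / Z * f w) - Real.log Z * (Real.exp (-β * f w) / Z) := by
    intro w
    rw [Real.log_div (Real.exp_pos _).ne' hZ.ne', Real.log_exp]
    ring
  simp only [hlog]
  rw [integral_sub (hI.const_mul _) ((hint.div_const Z).const_mul _), integral_const_mul,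
    integral_const_mul, integral_div, ← hZdef, div_self hZ.ne']
  ring

/-- expected suboptimality of a sample from the Gibbs measure. -/
theorem stmt15 {d : ℕ} (f : EuclideanSpace ℝ (Fin d) → ℝ) (hf : Differentiable ℝ f)
    (Mt γ β m b : ℝ) (hM : 0 < Mt) (hγ0 : 0 ≤ γ) (hγ1 : γ < 1)
    (hβ : 0 < β) (hm : 0 < m) (hb : 0 ≤ b)
    (hHolder : ∀ x y, ‖gradient f x - gradient f y‖ ≤ Mt * ‖x - y‖ ^ γ)
    (wstar : EuclideanSpace ℝ (Fin d))
    (hmin : ∀ w, f wstar ≤ f w) (hcrit : gradient f wstar = 0)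
    (hint : Integrable (fun w => Real.exp (-β * f w)))
    (Z : ℝ) (hZdef : Z = ∫ w, Real.exp (-β * f w)) (hZpos : 0 < Z)
    (πhat : Measure (EuclideanSpace ℝ (Fin d)))
    (hπhat : πhat = volume.withDensity (fun w => ENNReal.ofReal (Real.exp (-β * f w) / Z)))
    (hfπ : Integrable f πhat)
    (hmom : (∫ w, ‖w‖ ^ 2 ∂πhat) ≤ (b + d / β) / m)
    (hentropy : -(∫ w, (Real.exp (-β * f w) / Z) * Real.log (Real.exp (-β * f w) / Z))
        ≤ ((d : ℝ) / 2) * Real.log (2 * Real.pi * Real.exp 1 * (b + d / β) / (d * m))) :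
    (∫ w, f w ∂πhat) - f wstar
      ≤ β⁻¹ * Real.log ((2 * Real.exp 1 * (b + d / β)) ^ ((d : ℝ) / 2)
            * Real.Gamma ((d : ℝ) / 2 + 1) * β ^ (d : ℝ) / (d * m) ^ ((d : ℝ) / 2))
        + β ^ (-γ - 1) * Mt / (1 + γ) := by
  subst hπhat
  rw [entropy_gibbs hint hZdef hZpos hfπ] at hentropy
  have hG : 0 < Real.Gamma ((d : ℝ) / 2 + 1) := Real.Gamma_pos_of_pos (by positivity)
  have hZlow := exp_mul_volume_ball_le_integral (r := β⁻¹) hf hM.le hγ0 hβ.le hHolder hcrit hint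
  rw [← hZdef, volume_real_ball_euclidean d wstar (inv_pos.2 hβ)] at hZlow
  have hlogZ := Real.log_le_log (by positivity) hZlow
  rw [Real.log_mul (by positivity) (by positivity), Real.log_exp,
    Real.log_mul (by positivity) (by positivity), Real.log_pow, Real.log_inv,
    Real.log_div (by positivity) hG.ne', Real.log_rpow Real.pi_pos] at hlogZ
  have hpow : (β⁻¹ : ℝ) ^ (1 + γ) = β ^ (-γ - 1) := by
    rw [Real.inv_rpow hβ.le, ← Real.rpow_neg hβ.le]
    ring_nf
  rw [hpow] at hlogZ
  -- The powers of `π` cancel; `d = 0` is separate because there `log 0` and `0 / 0` occur.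
  have hlogs : ((d : ℝ) / 2) * Real.log (2 * Real.pi * Real.exp 1 * (b + d / β) / (d * m))
      + d * Real.log β + Real.log (Real.Gamma ((d : ℝ) / 2 + 1)) - (d : ℝ) / 2 * Real.log Real.pi
      = Real.log ((2 * Real.exp 1 * (b + d / β)) ^ ((d : ℝ) / 2)
            * Real.Gamma ((d : ℝ) / 2 + 1) * β ^ (d : ℝ) / (d * m) ^ ((d : ℝ) / 2)) := by
    rcases Nat.eq_zero_or_pos d with rfl | hd
    · simp
    · have hd' : (0 : ℝ) < d := Nat.cast_pos.2 hd
      have hA : 0 < 2 * Real.exp 1 * (b + d / β) := by positivity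
      rw [show 2 * Real.pi * Real.exp 1 * (b + d / β) = Real.pi * (2 * Real.exp 1 * (b + d / β))
          by ring, Real.log_div (by positivity) (by positivity), Real.log_mul (by positivity) hA.ne',
        Real.log_div (by positivity) (by positivity),
        Real.log_mul (x := _ * Real.Gamma _) (by positivity) (by positivity),
        Real.log_mul (by positivity) hG.ne', Real.log_rpow hA, Real.log_rpow hβ,
        Real.log_rpow (by positivity)]
      ring
  rw [← hlogs]
  refine le_of_mul_le_mul_left ?_ hβ
  rw [mul_add, mul_inv_cancel_left₀ hβ.ne']
  have hrem : β * (Mt / (1 + γ) * β ^ (-γ - 1)) = β * (β ^ (-γ - 1) * Mt / (1 + γ)) := by ring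
  linarith
end

section
/- Let γ ≥ 0. There exist real numbers p, q, p₁, q₁ > 1 satisfying 1/p + 1/q = 1, 1/p₁ + 1/q₁ = 1, γp < 1, γq₁ < 1, and (q − 1)p₁ < 1, if and only if γ < (3 − √5)/2. -/
/-! In terms of `a = 1/p` and `b = 1/q₁` the constraints say that `a, b` lie in `(0, 1)`, both exceed
`γ`, and `a < (1 - a) (1 - b)`, because `q - 1 = a / (1 - a)` and `p₁ = 1 / (1 - b)`. Hence
`γ < (1 - γ)²`, i.e. `γ² - 3γ + 1 > 0` with `γ < 1`, which puts `γ` below the smaller root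
`(3 - √5)/2`. Conversely, if `γ` is below that root, then `a = b = t` works for any `t` strictly
between `γ` and the root. -/

/-- The number `(3 - √5)/2` is the threshold below which `t < (1 - t)²` holds on `t < 1`. -/
lemma lt_one_sub_sq_iff {t : ℝ} (ht : t < 1) :
    t < (1 - t) ^ 2 ↔ t < (3 - Real.sqrt 5) / 2 := by
  have hs : Real.sqrt 5 ^ 2 = 5 := Real.sq_sqrt (by norm_num)
  have hs0 : 0 ≤ Real.sqrt 5 := Real.sqrt_nonneg 5
  constructor
  · intro h
    have : Real.sqrt 5 < 3 - 2 * t := by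
      rw [Real.sqrt_lt' (by linarith)]
      nlinarith
    linarith
  · intro h
    nlinarith

/-- existence of exponents satisfying the constraints of
Assumption 4 is equivalent to γ < (3 − √5)/2. -/
theorem stmt16 (γ : ℝ) (hγ : 0 ≤ γ) :
    (∃ p q p₁ q₁ : ℝ, 1 < p ∧ 1 < q ∧ 1 < p₁ ∧ 1 < q₁ ∧
        1 / p + 1 / q = 1 ∧ 1 / p₁ + 1 / q₁ = 1 ∧
        γ * p < 1 ∧ γ * q₁ < 1 ∧ (q - 1) * p₁ < 1)
      ↔ γ < (3 - Real.sqrt 5) / 2 := by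
  constructor
  · rintro ⟨p, q, p₁, q₁, hp, hq, hp₁, hq₁, h, h₁, hγp, hγq, hqp⟩
    have hγa : γ < 1 / p := by rwa [lt_div_iff₀ (by linarith)]
    have hγb : γ < 1 / q₁ := by rwa [lt_div_iff₀ (by linarith)]
    have ha1 : 1 / p < 1 := by rwa [div_lt_one (by linarith)]
    have hb1 : 1 / q₁ < 1 := by rwa [div_lt_one (by linarith)]
    -- dividing `(q - 1) p₁ < 1` by `q p₁` gives `1 - 1/q < (1/q) (1/p₁)`
    have key : 1 / p < (1 - 1 / p) * (1 - 1 / q₁) := by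
      have e1 : 1 / p = (q - 1) * p₁ / (q * p₁) := by
        rw [show 1 / p = 1 - 1 / q by linarith]
        field_simp
      have e2 : (1 - 1 / p) * (1 - 1 / q₁) = 1 / (q * p₁) := by
        rw [show 1 - 1 / p = 1 / q by linarith, show 1 - 1 / q₁ = 1 / p₁ by linarith]
        field_simp
      rw [e2, e1]
      gcongr
    refine (lt_one_sub_sq_iff (by linarith)).1 ?_
    nlinarith
  · intro h
    obtain ⟨t, hγt, ht⟩ := exists_between h
    have ht0 : 0 < t := by linarith
    have ht1 : t < 1 := by
      have : 1 < Real.sqrt 5 := by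
        rw [Real.lt_sqrt (by norm_num)]
        norm_num
      linarith
    have hs : 0 < 1 - t := by linarith
    have hlt := (lt_one_sub_sq_iff ht1).2 ht
    have hp : 1 < 1 / t := by rwa [lt_div_iff₀ ht0, one_mul]
    have hq : 1 < 1 / (1 - t) := by
      rw [lt_div_iff₀ hs]
      linarith
    have hγp : γ * (1 / t) < 1 := by
      rwa [mul_one_div, div_lt_one ht0]
    refine ⟨1 / t, 1 / (1 - t), 1 / (1 - t), 1 / t, hp, hq, hq, hp, ?_, ?_, hγp, hγp, ?_⟩
    · rw [one_div_one_div, one_div_one_div]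
      ring
    · rw [one_div_one_div, one_div_one_div]
      ring
    · have e : (1 / (1 - t) - 1) * (1 / (1 - t)) = t / (1 - t) ^ 2 := by
        field_simp
        ring
      rw [e, div_lt_one (by positivity)]
      exact hlt
end
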